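/- Let p ∈ (2, ∞). There exists a constant C_p > 0 (depending only on p) such that for every R ≥ 0 and every u ∈ H¹(ℝ², ℂ) one has ‖K_R ∗ |u|²‖_p ≤ C_p ‖u‖_{H¹}², where K_R ∗ |u|² is the (componentwise) convolution of the kernel K_R with the density |u|². -/

import Mathlib

noncomputable section
open MeasureTheory ENNReal
open scoped RealInnerProductSpace

/-- The plane `ℝ²`. -/
abbrev E2 : Type := EuclideanSpace ℝ (Fin 2)

/-- The rotation by 90 degrees: `x^⊥ = (-x₂, x₁)`. -/
def perp (x : E2) : E2 := (WithLp.equiv 2 (Fin 2 → ℝ)).symm ![-(x 1), x 0]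

/-- The Aharonov–Bohm kernel `K_R(x) = x^⊥ / (max R ‖x‖)²` (with `K_R 0 = 0`,
also when `R = 0`, by the junk-value convention `(0 : ℝ)⁻¹ = 0`). -/
def K (R : ℝ) (x : E2) : E2 := ((max R ‖x‖) ^ 2)⁻¹ • perp x

/-- The standard basis of `ℝ²`. -/
def e2 (j : Fin 2) : E2 := EuclideanSpace.single j 1

/-- Componentwise convolution of the vector kernel `K_R` with a scalar density. -/
def convKs (R : ℝ) (ρ : E2 → ℝ) (x : E2) : E2 := ∫ y, ρ y • K R (x - y)

/-- Convolution of the vector kernel `K_R` with a vector field, summed over components. -/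
def convKv (R : ℝ) (F : E2 → E2) (x : E2) : ℝ := ∫ y, ⟪K R (x - y), F y⟫

/-- The current `J[u] = i(u∇ū - ū∇u) = 2 Im(ū ∇u)`, an `ℝ²`-valued function. -/
def Jf (u : E2 → ℂ) (x : E2) : E2 :=
  (WithLp.equiv 2 (Fin 2 → ℝ)).symm fun j =>
    2 * ((starRingEnd ℂ) (u x) * fderiv ℝ u x (e2 j)).im

/-- The `H¹` norm `(‖u‖₂² + ‖∇u‖₂²)^{1/2}` (extended-real valued). -/
def H1 (u : E2 → ℂ) : ℝ≥0∞ :=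
  (eLpNorm u 2 volume ^ 2 + eLpNorm (fun x => fderiv ℝ u x) 2 volume ^ 2) ^ (1 / 2 : ℝ)

/-- The `H²` norm `(‖u‖₂² + ‖∇u‖₂² + ‖∇²u‖₂²)^{1/2}` (extended-real valued). -/
def H2 (u : E2 → ℂ) : ℝ≥0∞ :=
  (eLpNorm u 2 volume ^ 2 + eLpNorm (fun x => fderiv ℝ u x) 2 volume ^ 2
    + eLpNorm (fun x => fderiv ℝ (fderiv ℝ u) x) 2 volume ^ 2) ^ (1 / 2 : ℝ)

/-!
Uniformly in `R`, the kernel `K_R` is dominated by `1 / ‖x‖`. Cut `1 / ‖x‖` at the unit circle: the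
near part lies in `L^s` for `s = 2 * p / (p + 2) < 2`, the far part in `L^p`. With `ρ = |u|²`,
Young's inequality pairs the near part with `‖ρ‖₂` (as `1 / 2 + 1 / s = 1 + 1 / p`) and the far part
with `‖ρ‖₁ = ‖u‖₂²`. In the plane the Gagliardo–Nirenberg–Sobolev inequality reads
`‖ρ‖₂ ≤ ‖∇ρ‖₁`, and `|∇ρ| ≤ 2 |u| |∇u| ≤ |u|² + |∇u|²`.
-/

section Young

variable {G : Type*} [AddGroup G] [MeasurableSpace G] [MeasurableAdd₂ G] [MeasurableNeg G]
  {μ : Measure G} [μ.IsAddLeftInvariant] {f g h : G → ℝ≥0∞}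

theorem lintegral_neg_add_eq_self [μ.IsNegInvariant] (f : G → ℝ≥0∞) (x : G) :
    ∫⁻ y, f (-y + x) ∂μ = ∫⁻ y, f y ∂μ := by
  rw [← lintegral_neg_eq_self f, ← lintegral_add_left_eq_self (fun y => f (-y)) (-x)]
  simp only [neg_add_rev, neg_neg]

variable [SFinite μ]

theorem lconvolution_add (hf : AEMeasurable f μ) (hg : AEMeasurable g μ) :
    f ⋆ₗ[μ] (g + h) = f ⋆ₗ[μ] g + f ⋆ₗ[μ] h := by
  ext x
  simp only [lconvolution_def, Pi.add_apply, mul_add]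
  exact lintegral_add_left' (by fun_prop) _

theorem lintegral_lconvolution (hf : AEMeasurable f μ) (hg : AEMeasurable g μ) :
    ∫⁻ x, (f ⋆ₗ[μ] g) x ∂μ = (∫⁻ x, f x ∂μ) * ∫⁻ x, g x ∂μ := by
  simp only [lconvolution_def]
  rw [lintegral_lintegral_swap (by fun_prop), ← lintegral_mul_const'' _ hf]
  refine lintegral_congr fun y => ?_
  have hgy : AEMeasurable (fun x => g (-y + x)) μ :=
    hg.comp_quasiMeasurePreserving (measurePreserving_add_left μ (-y)).quasiMeasurePreserving
  rw [lintegral_const_mul'' _ hgy, lintegral_add_left_eq_self g (-y)]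

variable {p q r : ℝ}

theorem lconvolution_le_rpow_mul_rpow [μ.IsNegInvariant] (hf : AEMeasurable f μ)
    (hg : AEMeasurable g μ) (hp : 1 ≤ p) (hq : 1 ≤ q) (hr : 0 < r) (hpqr : p⁻¹ + q⁻¹ = 1 + r⁻¹)
    (x : G) :
    (f ⋆ₗ[μ] g) x ≤ ((fun y => f y ^ p) ⋆ₗ[μ] fun y => g y ^ q) x ^ r⁻¹ *
      ((∫⁻ y, f y ^ p ∂μ) ^ (p⁻¹ - r⁻¹) * (∫⁻ y, g y ^ q ∂μ) ^ (q⁻¹ - r⁻¹)) := by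
  have hr' : 0 ≤ r⁻¹ := (inv_pos.2 hr).le
  have hpr : 0 ≤ p⁻¹ - r⁻¹ := by linarith [inv_le_one_of_one_le₀ hq]
  have hqr : 0 ≤ q⁻¹ - r⁻¹ := by linarith [inv_le_one_of_one_le₀ hp]
  have rpow_split (z : ℝ≥0∞) {t : ℝ} (ht : 1 ≤ t) (htr : 0 ≤ t⁻¹ - r⁻¹) :
      (z ^ t) ^ r⁻¹ * (z ^ t) ^ (t⁻¹ - r⁻¹) = z := by
    rw [← ENNReal.rpow_add_of_nonneg _ _ hr' htr, add_sub_cancel,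
      ENNReal.rpow_rpow_inv (by linarith)]
  have holder := ENNReal.lintegral_prod_norm_pow_le (μ := μ) Finset.univ
    (f := ![fun y => f y ^ p * g (-y + x) ^ q, fun y => f y ^ p, fun y => g (-y + x) ^ q])
    (p := ![r⁻¹, p⁻¹ - r⁻¹, q⁻¹ - r⁻¹])
    (by simpa [Fin.forall_fin_succ] using ⟨by fun_prop, by fun_prop, by fun_prop⟩)
    (by simp only [Fin.sum_univ_three, Matrix.cons_val]; linarith)
    (by simpa [Fin.forall_fin_succ] using ⟨hr.le, sub_nonneg.1 hpr, sub_nonneg.1 hqr⟩)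
  simp only [Fin.prod_univ_three, Matrix.cons_val_zero, Matrix.cons_val_one,
    Matrix.cons_val] at holder
  rw [lintegral_neg_add_eq_self (fun y => g y ^ q) x, mul_assoc] at holder
  refine (lintegral_congr fun y => ?_).trans_le holder
  calc f y * g (-y + x)
      = ((f y ^ p) ^ r⁻¹ * (f y ^ p) ^ (p⁻¹ - r⁻¹)) *
          ((g (-y + x) ^ q) ^ r⁻¹ * (g (-y + x) ^ q) ^ (q⁻¹ - r⁻¹)) := by
        rw [rpow_split _ hp hpr, rpow_split _ hq hqr]
    _ = _ := by rw [ENNReal.mul_rpow_of_nonneg _ _ hr']; ring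

/-- **Young's convolution inequality**. -/
theorem eLpNorm'_lconvolution_le [μ.IsNegInvariant] (hf : AEMeasurable f μ)
    (hg : AEMeasurable g μ) (hp : 1 ≤ p) (hq : 1 ≤ q) (hr : 0 < r)
    (hpqr : p⁻¹ + q⁻¹ = 1 + r⁻¹) :
    eLpNorm' (f ⋆ₗ[μ] g) r μ ≤ eLpNorm' f p μ * eLpNorm' g q μ := by
  have hr' : 0 ≤ r⁻¹ := (inv_pos.2 hr).le
  have hpr : 0 ≤ p⁻¹ - r⁻¹ := by linarith [inv_le_one_of_one_le₀ hq]
  have hqr : 0 ≤ q⁻¹ - r⁻¹ := by linarith [inv_le_one_of_one_le₀ hp]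
  simp only [eLpNorm', enorm_eq_self, one_div]
  set A := ∫⁻ y, f y ^ p ∂μ
  set B := ∫⁻ y, g y ^ q ∂μ
  set M := A ^ (p⁻¹ - r⁻¹) * B ^ (q⁻¹ - r⁻¹)
  have rpow_merge (z : ℝ≥0∞) {t : ℝ} (ht : 0 ≤ t⁻¹ - r⁻¹) :
      z ^ r⁻¹ * z ^ (t⁻¹ - r⁻¹) = z ^ t⁻¹ := by
    rw [← ENNReal.rpow_add_of_nonneg _ _ hr' ht, add_sub_cancel]
  calc (∫⁻ x, (f ⋆ₗ[μ] g) x ^ r ∂μ) ^ r⁻¹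
      ≤ (∫⁻ x, ((fun y => f y ^ p) ⋆ₗ[μ] fun y => g y ^ q) x * M ^ r ∂μ) ^ r⁻¹ := by
        gcongr with x
        refine (ENNReal.rpow_le_rpow
          (lconvolution_le_rpow_mul_rpow hf hg hp hq hr hpqr x) hr.le).trans_eq ?_
        rw [ENNReal.mul_rpow_of_nonneg _ _ hr.le, ENNReal.rpow_inv_rpow hr.ne']
    _ = (A * B) ^ r⁻¹ * M := by
        rw [lintegral_mul_const'' _ (by fun_prop),
          lintegral_lconvolution (by fun_prop) (by fun_prop),
          ENNReal.mul_rpow_of_nonneg _ _ hr', ENNReal.rpow_rpow_inv hr.ne']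
    _ = A ^ p⁻¹ * B ^ q⁻¹ := by
        rw [ENNReal.mul_rpow_of_nonneg _ _ hr', ← rpow_merge A hpr, ← rpow_merge B hqr]
        ring

end Young

section RieszKernel

variable {E : Type*} [NormedAddCommGroup E]

/-- The kernel `‖x‖ ^ (-a)` of the Riesz potential of order `dim E - a`, without its normalizing
constant. For `a ≠ 0` its value at the origin is `0`, by the convention `0 ^ (-a) = 0`. -/
def rieszKernel (a : ℝ) (x : E) : ℝ≥0∞ := ENNReal.ofReal (‖x‖ ^ (-a))

theorem rieszKernel_rpow (a : ℝ) {s : ℝ} (hs : 0 ≤ s) (x : E) :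
    rieszKernel a x ^ s = rieszKernel (a * s) x := by
  rw [rieszKernel, rieszKernel, ENNReal.ofReal_rpow_of_nonneg (by positivity) hs,
    ← Real.rpow_mul (norm_nonneg x), neg_mul]

variable [MeasurableSpace E]

theorem eLpNorm'_indicator_rieszKernel {S : Set E} (hS : MeasurableSet S) (μ : Measure E) (a : ℝ)
    {s : ℝ} (hs : 0 < s) :
    eLpNorm' (S.indicator (rieszKernel a)) s μ =
      (∫⁻ x in S, rieszKernel (a * s) x ∂μ) ^ (1 / s) := by
  rw [eLpNorm', ← lintegral_indicator hS]
  congr 2 with x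
  by_cases hx : x ∈ S <;> simp [hx, hs, rieszKernel_rpow a hs.le]

variable [BorelSpace E]

@[fun_prop]
theorem measurable_rieszKernel (a : ℝ) : Measurable (rieszKernel (E := E) a) := by
  unfold rieszKernel
  fun_prop

variable [NormedSpace ℝ E] [FiniteDimensional ℝ E] (μ : Measure E) [μ.IsAddHaarMeasure]

theorem lintegral_ball_rieszKernel_lt_top [Nontrivial E] {a : ℝ} (ha : a < Module.finrank ℝ E) :
    ∫⁻ x in Metric.ball (0 : E) 1, rieszKernel a x ∂μ < ⊤ := by
  have integrable : IntegrableOn (fun x : E => ‖x‖ ^ (-a)) (Metric.ball 0 1) μ := by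
    refine integrableOn_ball_of_norm_le_rpow (C := 1) Module.finrank_pos ha ?_
      (by fun_prop : Measurable fun x : E => ‖x‖ ^ (-a)).aestronglyMeasurable
    exact .of_forall fun x => by rw [one_mul, Real.norm_of_nonneg (by positivity)]
  exact (hasFiniteIntegral_iff_ofReal (.of_forall fun x => by positivity)).1 integrable.2

theorem lintegral_compl_ball_rieszKernel_lt_top {a : ℝ} (ha : Module.finrank ℝ E < a) :
    ∫⁻ x in (Metric.ball (0 : E) 1)ᶜ, rieszKernel a x ∂μ < ⊤ := by
  have neg_a_nonpos : -a ≤ 0 := neg_nonpos.2 ((Nat.cast_nonneg _).trans ha.le)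
  calc ∫⁻ x in (Metric.ball (0 : E) 1)ᶜ, rieszKernel a x ∂μ
      ≤ ∫⁻ x in (Metric.ball (0 : E) 1)ᶜ,
          ENNReal.ofReal (2 ^ a) * ENNReal.ofReal ((1 + ‖x‖) ^ (-a)) ∂μ := by
        refine setLIntegral_mono (by fun_prop) fun x hx => ?_
        have hx1 : 1 ≤ ‖x‖ := by simpa using hx
        rw [rieszKernel, ← ENNReal.ofReal_mul (by positivity)]
        refine ENNReal.ofReal_le_ofReal ?_
        calc ‖x‖ ^ (-a) ≤ ((1 + ‖x‖) / 2) ^ (-a) :=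
              Real.rpow_le_rpow_of_nonpos (by positivity) (by linarith) neg_a_nonpos
          _ = 2 ^ a * (1 + ‖x‖) ^ (-a) := by
              rw [Real.div_rpow (by positivity) zero_le_two, Real.rpow_neg zero_le_two,
                div_inv_eq_mul, mul_comm]
    _ ≤ ∫⁻ x, ENNReal.ofReal (2 ^ a) * ENNReal.ofReal ((1 + ‖x‖) ^ (-a)) ∂μ :=
        setLIntegral_le_lintegral _ _
    _ < ⊤ := by
        rw [lintegral_const_mul _ (by fun_prop)]
        exact ENNReal.mul_lt_top ENNReal.ofReal_lt_top (finite_integral_one_add_norm ha)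

theorem exists_eLpNorm'_lconvolution_rieszKernel_le [Nontrivial E] {a q r s : ℝ} (hq : 1 ≤ q)
    (hs : 1 ≤ s) (hr : 0 < r) (hqsr : q⁻¹ + s⁻¹ = 1 + r⁻¹) (has : a * s < Module.finrank ℝ E)
    (har : Module.finrank ℝ E < a * r) :
    ∃ C : NNReal, ∀ f : E → ℝ≥0∞, AEMeasurable f μ →
      eLpNorm' (f ⋆ₗ[μ] rieszKernel a) r μ ≤ C * (eLpNorm' f 1 μ + eLpNorm' f q μ) := by
  have hr1 : 1 ≤ r := by
    refine (one_le_inv₀ (inv_pos.2 hr)).2 ?_ |>.trans_eq (inv_inv r)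
    linarith [inv_le_one_of_one_le₀ hq, inv_le_one_of_one_le₀ hs]
  have hball : MeasurableSet (Metric.ball (0 : E) 1) := measurableSet_ball
  set near : E → ℝ≥0∞ := (Metric.ball 0 1).indicator (rieszKernel a)
  set far : E → ℝ≥0∞ := (Metric.ball 0 1)ᶜ.indicator (rieszKernel a)
  have near_meas : Measurable near := (measurable_rieszKernel a).indicator hball
  have far_meas : Measurable far := (measurable_rieszKernel a).indicator hball.compl
  have near_lt_top : eLpNorm' near s μ < ⊤ := by
    rw [eLpNorm'_indicator_rieszKernel hball μ a (by linarith)]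
    exact ENNReal.rpow_lt_top_of_nonneg (by positivity)
      (lintegral_ball_rieszKernel_lt_top μ has).ne
  have far_lt_top : eLpNorm' far r μ < ⊤ := by
    rw [eLpNorm'_indicator_rieszKernel hball.compl μ a hr]
    exact ENNReal.rpow_lt_top_of_nonneg (by positivity)
      (lintegral_compl_ball_rieszKernel_lt_top μ har).ne
  lift eLpNorm' near s μ to NNReal using near_lt_top.ne with A hA
  lift eLpNorm' far r μ to NNReal using far_lt_top.ne with B hB
  refine ⟨A + B, fun f hf => ?_⟩
  calc eLpNorm' (f ⋆ₗ[μ] rieszKernel a) r μ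
      = eLpNorm' (f ⋆ₗ[μ] near + f ⋆ₗ[μ] far) r μ := by
        rw [← lconvolution_add hf near_meas.aemeasurable, Set.indicator_self_add_compl]
    _ ≤ eLpNorm' (f ⋆ₗ[μ] near) r μ + eLpNorm' (f ⋆ₗ[μ] far) r μ :=
        eLpNorm'_add_le (aemeasurable_lconvolution hf (by fun_prop)).aestronglyMeasurable
          (aemeasurable_lconvolution hf (by fun_prop)).aestronglyMeasurable hr1
    _ ≤ eLpNorm' f q μ * A + eLpNorm' f 1 μ * B := by
        rw [hA, hB]
        exact add_le_add (eLpNorm'_lconvolution_le hf (by fun_prop) hq hs hr hqsr)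
          (eLpNorm'_lconvolution_le hf (by fun_prop) le_rfl hr1 hr (by rw [inv_one]))
    _ ≤ (eLpNorm' f 1 μ + eLpNorm' f q μ) * A + (eLpNorm' f 1 μ + eLpNorm' f q μ) * B := by
        gcongr
        · exact le_add_self
        · exact le_self_add
    _ = _ := by push_cast; ring

end RieszKernel

section Sobolev

open Function

theorem ae_lintegral_update_lt_top {ι : Type*} [Fintype ι] [DecidableEq ι] {X : ι → Type*}
    [∀ i, MeasurableSpace (X i)] (μ : ∀ i, Measure (X i)) [∀ i, SigmaFinite (μ i)]
    {f : (∀ i, X i) → ℝ≥0∞} (hf : Measurable f) (hfin : ∫⁻ x, f x ∂Measure.pi μ ≠ ⊤) (i : ι) :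
    ∀ᵐ x ∂Measure.pi μ, ∫⁻ t, f (update x i t) ∂μ i < ⊤ := by
  set e := MeasurableEquiv.piEquivPiSubtypeProd X (· = i)
  have he := measurePreserving_piEquivPiSubtypeProd μ (· = i)
  have hfe : Measurable fun z => f (e.symm z) := hf.comp e.symm.measurable
  rw [← he.symm.lintegral_comp hf, lintegral_prod_symm _ hfe.aemeasurable] at hfin
  have ae_slice := ae_lt_top hfe.lintegral_prod_left' hfin
  filter_upwards [(Measure.quasiMeasurePreserving_snd.comp he.quasiMeasurePreserving).ae ae_slice]
    with x hx
  have hu := measurePreserving_piUnique fun j : {j // j = i} => μ j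
  refine (hu.lintegral_comp (f := fun t => f (update x i t)) (by fun_prop)).symm.trans_lt ?_
  convert hx using 4 with y
  ext j
  rcases eq_or_ne j i with rfl | hj
  · simp only [e, comp_apply, update_self, MeasurableEquiv.piUnique_apply,
      MeasurableEquiv.piEquivPiSubtypeProd, MeasurableEquiv.coe_mk, MeasurableEquiv.symm_mk,
      Equiv.piEquivPiSubtypeProd_apply, Equiv.piEquivPiSubtypeProd_symm_apply, ↓reduceDIte]
    rfl
  · simp [e, hj, MeasurableEquiv.piEquivPiSubtypeProd]

variable {F : Type*} [NormedAddCommGroup F]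

theorem enorm_le_lintegral_enorm_deriv [NormedSpace ℝ F] [CompleteSpace F] {g : ℝ → F}
    (hg : Differentiable ℝ g) (hfin : ∫⁻ t, ‖g t‖ₑ < ⊤) (s : ℝ) :
    ‖g s‖ₑ ≤ ∫⁻ t, ‖deriv g t‖ₑ := by
  rcases eq_top_or_lt_top (∫⁻ t, ‖deriv g t‖ₑ) with htop | hlt
  · exact htop ▸ le_top
  have g_int : Integrable g := ⟨hg.continuous.aestronglyMeasurable, hfin⟩
  have deriv_int : Integrable (deriv g) :=
    ⟨(stronglyMeasurable_deriv g).aestronglyMeasurable, hlt⟩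
  have hasDeriv : ∀ t ∈ Set.Iic s, HasDerivAt g (deriv g t) t := fun t _ => (hg t).hasDerivAt
  have tendsto_zero := tendsto_zero_of_hasDerivAt_of_integrableOn_Iic hasDeriv
    deriv_int.integrableOn g_int.integrableOn
  have ftc : ∫ t in Set.Iic s, deriv g t = g s := by
    simpa using integral_Iic_of_hasDerivAt_of_tendsto' hasDeriv deriv_int.integrableOn tendsto_zero
  calc ‖g s‖ₑ = ‖∫ t in Set.Iic s, deriv g t‖ₑ := by rw [ftc]
    _ ≤ ∫⁻ t in Set.Iic s, ‖deriv g t‖ₑ := enorm_integral_le_lintegral_enorm _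
    _ ≤ ∫⁻ t, ‖deriv g t‖ₑ := setLIntegral_le_lintegral _ _

variable {ι : Type*} [Fintype ι] {p : ℝ}

theorem enorm_le_lintegral_enorm_fderiv_update [DecidableEq ι] [NormedSpace ℝ F] [CompleteSpace F]
    {g : EuclideanSpace ℝ ι → F} (hg : Differentiable ℝ g) (x : ι → ℝ) (i : ι)
    (hfin : ∫⁻ t, ‖g (WithLp.toLp 2 (update x i t))‖ₑ < ⊤) :
    ‖g (WithLp.toLp 2 x)‖ₑ ≤ ∫⁻ t, ‖fderiv ℝ g (WithLp.toLp 2 (update x i t))‖ₑ := by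
  have line (t : ℝ) : HasDerivAt (fun t => WithLp.toLp 2 (update x i t))
      (EuclideanSpace.single i (1 : ℝ)) t := by
    simpa using! (PiLp.continuousLinearEquiv 2 ℝ fun _ : ι => ℝ).symm.hasFDerivAt.comp_hasDerivAt t
      (hasDerivAt_update x i t)
  have hasDeriv (t : ℝ) :=
    (hg (WithLp.toLp 2 (update x i t))).hasFDerivAt.comp_hasDerivAt t (line t)
  calc ‖g (WithLp.toLp 2 x)‖ₑ
      = ‖g (WithLp.toLp 2 (update x i (x i)))‖ₑ := by rw [update_eq_self]
    _ ≤ ∫⁻ t, ‖deriv (fun t => g (WithLp.toLp 2 (update x i t))) t‖ₑ :=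
        enorm_le_lintegral_enorm_deriv (fun t => (hasDeriv t).differentiableAt) hfin (x i)
    _ ≤ ∫⁻ t, ‖fderiv ℝ g (WithLp.toLp 2 (update x i t))‖ₑ := by
        refine lintegral_mono fun t => ?_
        rw [show deriv (fun t => g (WithLp.toLp 2 (update x i t))) t = _ from (hasDeriv t).deriv]
        refine ((fderiv ℝ g (WithLp.toLp 2 (update x i t))).le_opENorm _).trans_eq ?_
        rw [← ofReal_norm (EuclideanSpace.single i (1 : ℝ)), PiLp.norm_single, norm_one,
          ENNReal.ofReal_one, mul_one]

/-- **Gagliardo–Nirenberg–Sobolev inequality**. Integrability takes the place of compact support: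
`g` is integrable on almost every line parallel to an axis, so it tends to `0` along such a line
whenever its derivative is integrable there. -/
theorem lintegral_enorm_rpow_le_lintegral_enorm_fderiv_rpow [NormedSpace ℝ F] [CompleteSpace F]
    (hp : Real.HolderConjugate (Fintype.card ι) p) {g : EuclideanSpace ℝ ι → F}
    (hg : Differentiable ℝ g) (hfin : ∫⁻ x, ‖g x‖ₑ ≠ ⊤) :
    ∫⁻ x, ‖g x‖ₑ ^ p ≤ (∫⁻ x, ‖fderiv ℝ g x‖ₑ) ^ p := by
  classical
  have g_meas : Measurable fun x => ‖g x‖ₑ := hg.continuous.enorm.measurable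
  have fderiv_meas : Measurable fun x => ‖fderiv ℝ g x‖ₑ := (measurable_fderiv ℝ g).enorm
  have toLp := PiLp.volume_preserving_toLp ι
  have card_sub_one_pos : (0 : ℝ) < Fintype.card ι - 1 := sub_pos.2 hp.lt
  rw [← toLp.lintegral_comp g_meas] at hfin
  rw [← toLp.lintegral_comp (g_meas.pow_const p), ← toLp.lintegral_comp fderiv_meas]
  refine le_trans (lintegral_mono_ae ?_)
    (lintegral_prod_lintegral_pow_le _ hp (fderiv_meas.comp toLp.measurable))
  filter_upwards [ae_all_iff.2 (ae_lintegral_update_lt_top _ (g_meas.comp toLp.measurable) hfin)]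
    with x hx
  calc ‖g (WithLp.toLp 2 x)‖ₑ ^ p
      = ∏ _i : ι, ‖g (WithLp.toLp 2 x)‖ₑ ^ (1 / (Fintype.card ι - 1 : ℝ)) := by
        rw [Finset.prod_const, Finset.card_univ, ← ENNReal.rpow_mul_natCast, hp.conjugate_eq]
        congr 1
        field_simp
    _ ≤ _ := by
        gcongr with i
        exact enorm_le_lintegral_enorm_fderiv_update hg x i (hx i)

theorem enorm_fderiv_norm_sq_le {E : Type*} [NormedAddCommGroup E] [NormedSpace ℝ E]
    [InnerProductSpace ℝ F] {u : E → F} {x : E} (hu : DifferentiableAt ℝ u x) :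
    ‖fderiv ℝ (fun y => ‖u y‖ ^ 2) x‖ₑ ≤ ‖u x‖ₑ ^ 2 + ‖fderiv ℝ u x‖ₑ ^ 2 := by
  have bound : ‖fderiv ℝ (fun y => ‖u y‖ ^ 2) x‖ ≤ ‖u x‖ ^ 2 + ‖fderiv ℝ u x‖ ^ 2 := by
    rw [hu.hasFDerivAt.norm_sq.fderiv]
    calc ‖2 • (innerSL ℝ (u x)).comp (fderiv ℝ u x)‖
        ≤ 2 * (‖u x‖ * ‖fderiv ℝ u x‖) := by
          rw [two_nsmul, two_mul]
          refine norm_add_le_of_le ?_ ?_ <;>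
            exact (ContinuousLinearMap.opNorm_comp_le _ _).trans_eq (by rw [innerSL_apply_norm])
      _ ≤ ‖u x‖ ^ 2 + ‖fderiv ℝ u x‖ ^ 2 := by
          linarith [two_mul_le_add_sq ‖u x‖ ‖fderiv ℝ u x‖]
  simpa only [ofReal_norm, ENNReal.ofReal_add (sq_nonneg _) (sq_nonneg _),
    ENNReal.ofReal_pow (norm_nonneg _)] using ENNReal.ofReal_le_ofReal bound

theorem eLpNorm_two_sq {α : Type*} [MeasurableSpace α] (μ : Measure α) (f : α → F) :
    eLpNorm f 2 μ ^ 2 = ∫⁻ x, ‖f x‖ₑ ^ 2 ∂μ := by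
  simpa using eLpNorm_nnreal_pow_eq_lintegral (μ := μ) (f := f) (p := 2) two_ne_zero

theorem eLpNorm'_norm_sq_le [InnerProductSpace ℝ F]
    (hp : Real.HolderConjugate (Fintype.card ι) p) {u : EuclideanSpace ℝ ι → F}
    (hu : Differentiable ℝ u) :
    eLpNorm' (fun x => ‖u x‖ ^ 2) p volume ≤
      eLpNorm u 2 volume ^ 2 + eLpNorm (fderiv ℝ u) 2 volume ^ 2 := by
  simp only [eLpNorm_two_sq]
  rcases eq_or_ne (∫⁻ x, ‖u x‖ₑ ^ 2) ⊤ with htop | hfin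
  · simp [htop]
  have p_pos : 0 < p := hp.symm.pos
  calc eLpNorm' (fun x => ‖u x‖ ^ 2) p volume
      ≤ ((∫⁻ x, ‖fderiv ℝ (fun y => ‖u y‖ ^ 2) x‖ₑ) ^ p) ^ (1 / p) := by
        rw [eLpNorm']
        gcongr
        exact lintegral_enorm_rpow_le_lintegral_enorm_fderiv_rpow hp (hu.norm_sq ℝ)
          (by simpa using hfin)
    _ = ∫⁻ x, ‖fderiv ℝ (fun y => ‖u y‖ ^ 2) x‖ₑ := by
        rw [one_div, ENNReal.rpow_rpow_inv p_pos.ne']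
    _ ≤ ∫⁻ x, ‖u x‖ₑ ^ 2 + ‖fderiv ℝ u x‖ₑ ^ 2 :=
        lintegral_mono fun x => enorm_fderiv_norm_sq_le (hu x)
    _ = _ := lintegral_add_left (hu.continuous.enorm.measurable.pow_const 2) _

end Sobolev

section MagneticPotential

theorem norm_perp (x : E2) : ‖perp x‖ = ‖x‖ := by
  simp [perp, EuclideanSpace.norm_eq, Fin.sum_univ_two, add_comm]

theorem enorm_K_le_rieszKernel (R : ℝ) (x : E2) : ‖K R x‖ₑ ≤ rieszKernel 1 x := by
  rw [← ofReal_norm, rieszKernel, K, norm_smul, norm_perp, norm_inv, norm_pow,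
    Real.norm_of_nonneg (le_max_of_le_right (norm_nonneg x)), Real.rpow_neg_one]
  refine ENNReal.ofReal_le_ofReal ?_
  rcases eq_or_ne x 0 with rfl | hx
  · simp
  calc ((max R ‖x‖) ^ 2)⁻¹ * ‖x‖ ≤ (‖x‖ ^ 2)⁻¹ * ‖x‖ := by
        gcongr
        exact le_max_right _ _
    _ = ‖x‖⁻¹ := by field_simp

theorem enorm_convKs_le (R : ℝ) (ρ : E2 → ℝ) (x : E2) :
    ‖convKs R ρ x‖ₑ ≤ ((fun y => ‖ρ y‖ₑ) ⋆ₗ rieszKernel 1) x := by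
  refine (enorm_integral_le_lintegral_enorm _).trans (lintegral_mono fun y => ?_)
  rw [enorm_smul, neg_add_eq_sub]
  gcongr
  exact enorm_K_le_rieszKernel R (x - y)

theorem H1_sq (u : E2 → ℂ) :
    H1 u ^ 2 = eLpNorm u 2 volume ^ 2 + eLpNorm (fderiv ℝ u) 2 volume ^ 2 := by
  rw [H1, ← ENNReal.rpow_mul_natCast]
  norm_num

theorem statement0_general {F : Type*} [NormedAddCommGroup F] [InnerProductSpace ℝ F] (p : ℝ)
    (hp : 2 < p) :
    ∃ C : ℝ, 0 < C ∧ ∀ (R : ℝ) (u : E2 → F), Differentiable ℝ u →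
      eLpNorm (convKs R fun y => ‖u y‖ ^ 2) (ENNReal.ofReal p) volume ≤
        ENNReal.ofReal C * (eLpNorm u 2 volume ^ 2 + eLpNorm (fderiv ℝ u) 2 volume ^ 2) := by
  have hp0 : 0 < p := by linarith
  obtain ⟨C, hC⟩ := exists_eLpNorm'_lconvolution_rieszKernel_le (volume : Measure E2) (a := 1)
    (q := 2) (r := p) (s := 2 * p / (p + 2)) one_le_two
    ((one_le_div (by linarith)).2 (by linarith)) hp0 (by field_simp; ring)
    (by simp [div_lt_iff₀ (by linarith : 0 < p + 2)]) (by simpa using hp)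
  refine ⟨2 * C + 1, by positivity, fun R u hu => ?_⟩
  set N := eLpNorm u 2 volume ^ 2 + eLpNorm (fderiv ℝ u) 2 volume ^ 2 with hN
  set ρ : E2 → ℝ := fun y => ‖u y‖ ^ 2
  have ρ_L1 : eLpNorm' ρ 1 volume ≤ N := by
    simp [hN, eLpNorm_two_sq, eLpNorm', ρ]
  have ρ_L2 : eLpNorm' ρ 2 volume ≤ N :=
    eLpNorm'_norm_sq_le (by simpa using Real.HolderConjugate.two_two) hu
  calc eLpNorm (convKs R ρ) (ENNReal.ofReal p) volume
      = eLpNorm' (convKs R ρ) p volume := by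
        rw [eLpNorm_eq_eLpNorm' (by simpa) ENNReal.ofReal_ne_top, ENNReal.toReal_ofReal hp0.le]
    _ ≤ eLpNorm' ((fun y => ‖ρ y‖ₑ) ⋆ₗ rieszKernel 1) p volume :=
        eLpNorm'_mono_enorm_ae hp0.le (.of_forall (enorm_convKs_le R ρ))
    _ ≤ C * (eLpNorm' ρ 1 volume + eLpNorm' ρ 2 volume) := by
        simpa only [eLpNorm'_enorm] using
          hC _ (hu.norm_sq ℝ).continuous.enorm.measurable.aemeasurable
    _ ≤ C * (N + N) := by gcongr
    _ = ENNReal.ofReal (2 * C) * N := by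
        rw [ENNReal.ofReal_mul zero_le_two, ENNReal.ofReal_coe_nnreal, ENNReal.ofReal_ofNat]
        ring
    _ ≤ ENNReal.ofReal (2 * C + 1) * N := by
        gcongr
        linarith

end MagneticPotential

/-- Lemma 2.1, eq. (2.2), case `s = 0`: for `2 < p < ∞` there is `C_p > 0` such that
`‖K_R ∗ |u|²‖_p ≤ C_p ‖u‖_{H¹}²` for all `R ≥ 0` and all `u ∈ H¹(ℝ², ℂ)`. -/
theorem statement0 (p : ℝ) (hp : 2 < p) :
    ∃ C : ℝ, 0 < C ∧
      ∀ R : ℝ, 0 ≤ R → ∀ u : E2 → ℂ, Differentiable ℝ u → H1 u < ⊤ →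
        eLpNorm (convKs R fun y => ‖u y‖ ^ 2) (ENNReal.ofReal p) volume
          ≤ ENNReal.ofReal C * H1 u ^ 2 := by
  obtain ⟨C, hC, bound⟩ := statement0_general (F := ℂ) p hp
  exact ⟨C, hC, fun R _ u hu _ => H1_sq u ▸ bound R u hu⟩
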